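/- arXiv:2603.00290 — 5 statements merged into one kernel-verified Lean document; each statement's English description precedes it below -/
import Mathlib

section
/- Let K be an n×n real symmetric positive semidefinite matrix and σ² > 0, and set A = K + σ²·I (which is symmetric positive definite). Let W be an n_r×n real matrix and V an n_g×n real matrix with n = n_r + n_g satisfying W·Wᵀ = I, V·Vᵀ = I, W·Vᵀ = 0, and Wᵀ·W + Vᵀ·V = I. Given y_r ∈ ℝ^{n_r}, let y_g ∈ ℝ^{n_g} be a solution of (V·A⁻¹·Vᵀ)·y_g = −V·A⁻¹·Wᵀ·y_r, set y = Wᵀ·y_r + Vᵀ·y_g and α = A⁻¹·y. Then W·α = (W·K·Wᵀ + σ²·I)⁻¹·y_r; that is, the restriction of the full structured solution to the regular indices coincides with the solution of the linear system (W·K·Wᵀ + σ²·I)·α_r = y_r posed only on the regular indices. -/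
open Matrix

/-!
The equation defining the pseudovalues `yg` says exactly that `V α = 0`, so `α = Wᵀ (W α)` by the
partition identity. Applying `W` to `A α = y` then gives `(W A Wᵀ) (W α) = W y = yr`, and
`W A Wᵀ = W K Wᵀ + σ² I` because `W Wᵀ = I`. Both `A` and `W K Wᵀ + σ² I` are positive definite,
hence invertible.
-/

/-- A positive shift of a positive semidefinite matrix is invertible. -/
lemma isUnit_det_add_smul_one {m : ℕ} {M : Matrix (Fin m) (Fin m) ℝ} (hM : M.PosSemidef)
    {c : ℝ} (hc : 0 < c) : IsUnit (M + c • (1 : Matrix (Fin m) (Fin m) ℝ)).det :=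
  (Matrix.isUnit_iff_isUnit_det _).1
    (Matrix.PosDef.posSemidef_add hM (Matrix.PosDef.one.smul hc)).isUnit

/-- Lemma 1 (gappy-grid equivalence): if the pseudovalues `yg` solve
`(V A⁻¹ Vᵀ) yg = −V A⁻¹ Wᵀ yr`, then the restriction of the structured full-grid
solution `α = A⁻¹ y` to the regular indices equals the solution of the
restricted system `(W K Wᵀ + σ² I) α_r = yr`. -/
theorem stmt_0 {n nr ng : ℕ} (hn : n = nr + ng)
    (K : Matrix (Fin n) (Fin n) ℝ) (hK : K.PosSemidef)
    (σ2 : ℝ) (hσ : 0 < σ2)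
    (A : Matrix (Fin n) (Fin n) ℝ) (hA : A = K + σ2 • 1)
    (W : Matrix (Fin nr) (Fin n) ℝ) (V : Matrix (Fin ng) (Fin n) ℝ)
    (hWW : W * Wᵀ = 1) (hVV : V * Vᵀ = 1) (hWV : W * Vᵀ = 0)
    (hpart : Wᵀ * W + Vᵀ * V = 1)
    (yr : Fin nr → ℝ) (yg : Fin ng → ℝ)
    (hyg : (V * A⁻¹ * Vᵀ) *ᵥ yg = -((V * A⁻¹ * Wᵀ) *ᵥ yr))
    (y : Fin n → ℝ) (hy : y = Wᵀ *ᵥ yr + Vᵀ *ᵥ yg)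
    (α : Fin n → ℝ) (hα : α = A⁻¹ *ᵥ y) :
    W *ᵥ α = (W * K * Wᵀ + σ2 • 1)⁻¹ *ᵥ yr := by
  have hAu : IsUnit A.det := hA ▸ isUnit_det_add_smul_one hK hσ
  have hBu : IsUnit (W * K * Wᵀ + σ2 • (1 : Matrix (Fin nr) (Fin nr) ℝ)).det := by
    refine isUnit_det_add_smul_one ?_ hσ
    simpa using hK.mul_mul_conjTranspose_same W
  have hVα : V *ᵥ α = 0 := by
    rw [hα, hy, mulVec_mulVec, mulVec_add, mulVec_mulVec, mulVec_mulVec, hyg, add_neg_cancel]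
  have hαW : Wᵀ *ᵥ (W *ᵥ α) = α := by
    have h := congrArg (· *ᵥ α) hpart
    simpa [add_mulVec, ← mulVec_mulVec, hVα] using h
  have hAα : A *ᵥ α = y := by
    rw [hα, mulVec_mulVec, mul_nonsing_inv _ hAu, one_mulVec]
  have hB : W * K * Wᵀ + σ2 • (1 : Matrix (Fin nr) (Fin nr) ℝ) = W * A * Wᵀ := by
    rw [hA, Matrix.mul_add, Matrix.add_mul, Matrix.mul_smul, Matrix.mul_one, Matrix.smul_mul, hWW]
  have hsys : (W * K * Wᵀ + σ2 • (1 : Matrix (Fin nr) (Fin nr) ℝ)) *ᵥ (W *ᵥ α) = yr := by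
    rw [hB, ← mulVec_mulVec, hαW, ← mulVec_mulVec, hAα, hy, mulVec_add, mulVec_mulVec,
      mulVec_mulVec, hWW, hWV, one_mulVec, zero_mulVec, add_zero]
  rw [← hsys, mulVec_mulVec, nonsing_inv_mul _ hBu, one_mulVec]
end

section
/- Let K be an n×n real symmetric positive semidefinite matrix, σ² > 0, and A = K + σ²·I. Let (W, V) be a pair of selection matrices partitioning n indices into n_r regular and n_g gappy indices. Given y_r ∈ ℝ^{n_r}, let y_g ∈ ℝ^{n_g} satisfy (V·A⁻¹·Vᵀ)·y_g = −V·A⁻¹·Wᵀ·y_r, and set y = Wᵀ·y_r + Vᵀ·y_g. Then the quadratic form of the restricted system equals the quadratic form of the full structured system: y_rᵀ·(W·K·Wᵀ + σ²·I)⁻¹·y_r = yᵀ·A⁻¹·y. -/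
/-!
Put `x = A⁻¹ y`. The equation defining `yg` says exactly that `V x = 0`, so `x = Wᵀ W x` by the
partition identity. Applying `W` to `A x = y` then gives `(W A Wᵀ) (W x) = W y = yr`, where
`W A Wᵀ = W K Wᵀ + σ² I`; hence `W x` is the solution of the restricted system, and
`yᵀ x = yᵀ Wᵀ W x = yrᵀ (W x)`. Both inverses are genuine since both matrices are positive definite.
-/

open Matrix

/-- With pseudovalues `yg` chosen as in the gappy-grid method and
`y = Wᵀ yr + Vᵀ yg`, the quadratic form of the restricted system equals that of
the full structured system: `yrᵀ (W K Wᵀ + σ² I)⁻¹ yr = yᵀ A⁻¹ y`. -/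
theorem stmt_3 {n nr ng : ℕ} (hn : n = nr + ng)
    (K : Matrix (Fin n) (Fin n) ℝ) (hK : K.PosSemidef)
    (σ2 : ℝ) (hσ : 0 < σ2)
    (A : Matrix (Fin n) (Fin n) ℝ) (hA : A = K + σ2 • 1)
    (W : Matrix (Fin nr) (Fin n) ℝ) (V : Matrix (Fin ng) (Fin n) ℝ)
    (hWW : W * Wᵀ = 1) (hVV : V * Vᵀ = 1) (hWV : W * Vᵀ = 0)
    (hpart : Wᵀ * W + Vᵀ * V = 1)
    (yr : Fin nr → ℝ) (yg : Fin ng → ℝ)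
    (hyg : (V * A⁻¹ * Vᵀ) *ᵥ yg = -((V * A⁻¹ * Wᵀ) *ᵥ yr))
    (y : Fin n → ℝ) (hy : y = Wᵀ *ᵥ yr + Vᵀ *ᵥ yg) :
    yr ⬝ᵥ ((W * K * Wᵀ + σ2 • 1)⁻¹ *ᵥ yr) = y ⬝ᵥ (A⁻¹ *ᵥ y) := by
  have hApd : A.PosDef := hA ▸ PosDef.posSemidef_add hK (PosDef.one.smul hσ)
  have hBpd : (W * K * Wᵀ + σ2 • 1).PosDef := by
    refine PosDef.posSemidef_add ?_ (PosDef.one.smul hσ)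
    simpa [conjTranspose_eq_transpose_of_trivial] using hK.mul_mul_conjTranspose_same W
  have hAu : IsUnit A.det := (isUnit_iff_isUnit_det A).mp hApd.isUnit
  have hBu : IsUnit (W * K * Wᵀ + σ2 • 1).det := (isUnit_iff_isUnit_det _).mp hBpd.isUnit
  have hB : W * K * Wᵀ + σ2 • 1 = W * A * Wᵀ := by
    rw [hA, Matrix.mul_add, Matrix.add_mul, Matrix.mul_smul, Matrix.mul_one, Matrix.smul_mul, hWW]
  obtain ⟨x, hx⟩ : ∃ x, x = A⁻¹ *ᵥ y := ⟨_, rfl⟩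
  have hAx : A *ᵥ x = y := by
    rw [hx, mulVec_mulVec, mul_nonsing_inv A hAu, one_mulVec]
  have hVx : V *ᵥ x = 0 := by
    rw [hx, hy, mulVec_add, mulVec_add]
    simp only [mulVec_mulVec, ← Matrix.mul_assoc]
    rw [hyg, add_neg_cancel]
  -- the partition identity turns `V x = 0` into `x ∈ range Wᵀ`
  have hWx : Wᵀ *ᵥ (W *ᵥ x) = x := by
    have h := congrArg (· *ᵥ x) hpart
    simpa [add_mulVec, ← mulVec_mulVec, hVx] using h
  have hWy : W *ᵥ y = yr := by
    rw [hy, mulVec_add, mulVec_mulVec, mulVec_mulVec, hWW, hWV, one_mulVec, zero_mulVec, add_zero]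
  have hBx : (W * K * Wᵀ + σ2 • 1) *ᵥ (W *ᵥ x) = yr := by
    rw [hB, ← mulVec_mulVec, hWx, ← mulVec_mulVec, hAx, hWy]
  have hBinv : (W * K * Wᵀ + σ2 • 1)⁻¹ *ᵥ yr = W *ᵥ x := by
    rw [← hBx, mulVec_mulVec, nonsing_inv_mul _ hBu, one_mulVec]
  rw [hBinv, ← hx, ← hWx, dotProduct_mulVec y, vecMul_transpose, hWy, hWx]
end

section
/- Let K be an n×n real symmetric positive semidefinite matrix, σ² > 0, and A = K + σ²·I. Let (W, V) be a pair of selection matrices partitioning n indices into n_r regular and n_g gappy indices. Given y_r ∈ ℝ^{n_r}, let y_g ∈ ℝ^{n_g} satisfy (V·A⁻¹·Vᵀ)·y_g = −V·A⁻¹·Wᵀ·y_r, and set α = A⁻¹·(Wᵀ·y_r + Vᵀ·y_g). Then for every p and every p×n real matrix K_* (a cross-covariance matrix from test points to the full grid), the posterior mean computed through the full structured system agrees with the exact posterior mean on regular points: K_*·Wᵀ·((W·K·Wᵀ + σ²·I)⁻¹·y_r) = K_*·α. -/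
/-!
The equation defining `yg` says that `α` vanishes on the gappy indices (`V α = 0`), so
`α = Wᵀ (W α)` by the partition identity. Applying `W` to `A α = Wᵀ yr + Vᵀ yg` gives
`(W A Wᵀ) (W α) = yr`, and `W A Wᵀ = W K Wᵀ + σ² I` because `W Wᵀ = I`. That matrix is positive
definite, hence invertible, so `Wᵀ ((W K Wᵀ + σ² I)⁻¹ yr) = Wᵀ (W α) = α`.
-/

open Matrix

/-- With pseudovalues `yg` chosen as in the gappy-grid method and
`α = A⁻¹ (Wᵀ yr + Vᵀ yg)`, for every cross-covariance matrix `K⋆` the posterior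
mean computed through the full structured system agrees with the exact posterior
mean on regular points: `K⋆ Wᵀ ((W K Wᵀ + σ² I)⁻¹ yr) = K⋆ α`. -/
theorem stmt_4 {n nr ng : ℕ} (hn : n = nr + ng)
    (K : Matrix (Fin n) (Fin n) ℝ) (hK : K.PosSemidef)
    (σ2 : ℝ) (hσ : 0 < σ2)
    (A : Matrix (Fin n) (Fin n) ℝ) (hA : A = K + σ2 • 1)
    (W : Matrix (Fin nr) (Fin n) ℝ) (V : Matrix (Fin ng) (Fin n) ℝ)
    (hWW : W * Wᵀ = 1) (hVV : V * Vᵀ = 1) (hWV : W * Vᵀ = 0)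
    (hpart : Wᵀ * W + Vᵀ * V = 1)
    (yr : Fin nr → ℝ) (yg : Fin ng → ℝ)
    (hyg : (V * A⁻¹ * Vᵀ) *ᵥ yg = -((V * A⁻¹ * Wᵀ) *ᵥ yr))
    (α : Fin n → ℝ) (hα : α = A⁻¹ *ᵥ (Wᵀ *ᵥ yr + Vᵀ *ᵥ yg)) :
    ∀ (p : ℕ) (Kstar : Matrix (Fin p) (Fin n) ℝ),
      (Kstar * Wᵀ) *ᵥ ((W * K * Wᵀ + σ2 • 1)⁻¹ *ᵥ yr) = Kstar *ᵥ α := by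
  intro p Kstar
  have hAdet : IsUnit A.det := by
    have hpd : A.PosDef := by
      rw [hA]
      exact Matrix.PosDef.posSemidef_add hK (Matrix.PosDef.one.smul hσ)
    exact (Matrix.isUnit_iff_isUnit_det A).mp hpd.isUnit
  have hBdet : IsUnit (W * K * Wᵀ + σ2 • (1 : Matrix (Fin nr) (Fin nr) ℝ)).det := by
    have hsemi : (W * K * Wᵀ).PosSemidef := by
      have h := hK.mul_mul_conjTranspose_same W
      rwa [Matrix.conjTranspose_eq_transpose_of_trivial] at h
    exact (Matrix.isUnit_iff_isUnit_det _).mp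
      (Matrix.PosDef.posSemidef_add hsemi (Matrix.PosDef.one.smul hσ)).isUnit
  have hAα : A *ᵥ α = Wᵀ *ᵥ yr + Vᵀ *ᵥ yg := by
    rw [hα, Matrix.mulVec_mulVec, Matrix.mul_nonsing_inv A hAdet, Matrix.one_mulVec]
  -- The equation defining `yg` says exactly that `α` vanishes on the gappy indices.
  have hVα : V *ᵥ α = 0 := by
    rw [hα, Matrix.mulVec_mulVec, Matrix.mulVec_add, Matrix.mulVec_mulVec,
      Matrix.mulVec_mulVec, hyg, add_neg_cancel]
  have hWα : Wᵀ *ᵥ (W *ᵥ α) = α := by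
    have h := congrArg (fun M => M *ᵥ α) hpart
    simpa [Matrix.add_mulVec, ← Matrix.mulVec_mulVec, hVα] using h
  have hBα : (W * K * Wᵀ + σ2 • (1 : Matrix (Fin nr) (Fin nr) ℝ)) *ᵥ (W *ᵥ α) = yr := by
    have hB : W * K * Wᵀ + σ2 • (1 : Matrix (Fin nr) (Fin nr) ℝ) = W * A * Wᵀ := by
      rw [hA, Matrix.mul_add, Matrix.add_mul, Matrix.mul_smul, Matrix.mul_one,
        Matrix.smul_mul, hWW]
    rw [hB, ← Matrix.mulVec_mulVec, hWα, ← Matrix.mulVec_mulVec, hAα, Matrix.mulVec_add,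
      Matrix.mulVec_mulVec, Matrix.mulVec_mulVec, hWW, hWV, Matrix.one_mulVec,
      Matrix.zero_mulVec, add_zero]
  have hinv : (W * K * Wᵀ + σ2 • (1 : Matrix (Fin nr) (Fin nr) ℝ))⁻¹ *ᵥ yr = W *ᵥ α := by
    rw [← hBα, Matrix.mulVec_mulVec, Matrix.nonsing_inv_mul _ hBdet, Matrix.one_mulVec]
  rw [hinv, ← Matrix.mulVec_mulVec, hWα]
end

section
/- Let K_μ, K_x, K_T be real symmetric positive semidefinite matrices of sizes N×N, M×M, N_t×N_t respectively, and let K_Z = K_μ ⊗ K_x ⊗ K_T be their Kronecker product. Let σ² > 0. Let W̃ be an N_r×M selection matrix (rows are distinct standard basis vectors of ℝ^M) and W = I_N ⊗ W̃ ⊗ I_{N_t}. Given vectors k_μ ∈ ℝ^N, k_x ∈ ℝ^M, k_t ∈ ℝ^{N_t}, set k = k_μ ⊗ k_x ⊗ k_t ∈ ℝ^{N·M·N_t}, k_r = W·k, and let c ∈ ℝ. Define Var = c − k_rᵀ·(W·K_Z·Wᵀ + σ²·I)⁻¹·k_r and Var_Z = c − kᵀ·(K_Z + σ²·I)⁻¹·k.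 Then Var_Z ≤ Var ≤ c − ‖k_μ‖²·‖k_t‖²·‖W̃·k_x‖² / (λ_max(K_Z) + σ²), where λ_max(K_Z) is the largest eigenvalue of K_Z. -/
/-!
Write `A = K_Z + σ² I` and `B = W K_Z Wᵀ + σ² I`. Since the rows of `W` are orthonormal,
`B = W A Wᵀ`. Both bounds come from completing the square in a quadratic form: for a positive
semidefinite `A` with `A x = k`, one has `2 zᵀk - zᵀAz ≤ kᵀx` for every `z`
(`two_mul_sub_le_of_mulVec_eq`).

* Taking `z = Wᵀ B⁻¹ k_r` gives `k_rᵀ B⁻¹ k_r ≤ kᵀ A⁻¹ k`, the lower bound on the variance.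
* Applied to `B` with `z = k_r / (λ_max + σ²)`, together with the Rayleigh bound
  `zᵀBz ≤ (λ_max + σ²) ‖z‖²`, it gives `‖k_r‖² / (λ_max + σ²) ≤ k_rᵀ B⁻¹ k_r`. The norm `‖k_r‖²`
  factors because `k_r = k_μ ⊗ W̃ k_x ⊗ k_t`.
-/

open Matrix Kronecker

/-- Completing the square: `(x - z)ᵀ A (x - z) ≥ 0`, expanded with `A x = k`. -/
lemma two_mul_sub_le_of_mulVec_eq {n : Type*} [Fintype n] {A : Matrix n n ℝ}
    (hA : A.PosSemidef) {x k : n → ℝ} (hx : A *ᵥ x = k) (z : n → ℝ) :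
    2 * (z ⬝ᵥ k) - z ⬝ᵥ (A *ᵥ z) ≤ k ⬝ᵥ x := by
  have h := hA.dotProduct_mulVec_nonneg (x - z)
  have hsymm : x ⬝ᵥ (A *ᵥ z) = z ⬝ᵥ k := by
    have hT : Aᵀ = A := by simpa [IsHermitian] using hA.isHermitian
    rw [dotProduct_mulVec, ← mulVec_transpose, hT, hx, dotProduct_comm]
  simp only [star_trivial, mulVec_sub, sub_dotProduct, dotProduct_sub, hx, hsymm] at h
  rw [dotProduct_comm k x]
  linarith

/-- The Rayleigh bound for a real symmetric matrix. -/
lemma dotProduct_mulVec_le_of_isGreatest_spectrum {n : Type*} [Fintype n] [DecidableEq n]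
    {K : Matrix n n ℝ} (hK : K.IsHermitian) {lam : ℝ} (hlam : IsGreatest (spectrum ℝ K) lam)
    (v : n → ℝ) : v ⬝ᵥ (K *ᵥ v) ≤ lam * (v ⬝ᵥ v) := by
  have hH : (algebraMap ℝ (Matrix n n ℝ) lam - K).IsHermitian := by
    refine IsHermitian.sub ?_ hK
    simp [Algebra.algebraMap_eq_smul_one, IsHermitian]
  have hP : (algebraMap ℝ (Matrix n n ℝ) lam - K).PosSemidef := by
    rw [hH.posSemidef_iff_eigenvalues_nonneg]
    intro i
    have h := hH.eigenvalues_mem_spectrum_real i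
    rw [← spectrum.singleton_sub_eq] at h
    obtain ⟨a, rfl, b, hb, hab⟩ := h
    have := hlam.2 hb
    simp only [Pi.zero_apply] at *
    linarith
  have h := hP.dotProduct_mulVec_nonneg v
  simp only [star_trivial, sub_mulVec, dotProduct_sub, Algebra.algebraMap_eq_smul_one,
    smul_mulVec, one_mulVec, dotProduct_smul, smul_eq_mul] at h
  linarith

/-- The bounds for an arbitrary positive semidefinite `K` and a matrix `W` with orthonormal rows. -/
lemma gappy_quadratic_bounds {m n : Type*} [Fintype m] [DecidableEq m] [Fintype n] [DecidableEq n]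
    {K : Matrix n n ℝ} (hK : K.PosSemidef) {W : Matrix m n ℝ} (hW : W * Wᵀ = 1)
    {σ2 lam : ℝ} (hσ : 0 < σ2) (hlam : IsGreatest (spectrum ℝ K) lam) (k : n → ℝ) :
    (W *ᵥ k) ⬝ᵥ ((W * K * Wᵀ + σ2 • 1)⁻¹ *ᵥ (W *ᵥ k)) ≤ k ⬝ᵥ ((K + σ2 • 1)⁻¹ *ᵥ k) ∧
    ((W *ᵥ k) ⬝ᵥ (W *ᵥ k)) / (lam + σ2) ≤
      (W *ᵥ k) ⬝ᵥ ((W * K * Wᵀ + σ2 • 1)⁻¹ *ᵥ (W *ᵥ k)) := by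
  have hA : (K + σ2 • 1).PosDef := PosDef.posSemidef_add hK (PosDef.one.smul hσ)
  have hB : (W * K * Wᵀ + σ2 • 1).PosDef := by
    refine PosDef.posSemidef_add ?_ (PosDef.one.smul hσ)
    simpa using hK.mul_mul_conjTranspose_same W
  have hBW : W * K * Wᵀ + σ2 • 1 = W * (K + σ2 • 1) * Wᵀ := by
    rw [Matrix.mul_add, Matrix.add_mul, Matrix.mul_smul, Matrix.smul_mul, Matrix.mul_one, hW]
  have hlam0 : 0 < lam + σ2 := by
    have hmem := hlam.1
    rw [hK.isHermitian.spectrum_real_eq_range_eigenvalues] at hmem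
    obtain ⟨i, rfl⟩ := hmem
    have := hK.eigenvalues_nonneg i
    linarith
  set A := K + σ2 • (1 : Matrix n n ℝ) with hAdef
  set B := W * K * Wᵀ + σ2 • (1 : Matrix m m ℝ) with hBdef
  set r := W *ᵥ k with hr
  have hx : A *ᵥ (A⁻¹ *ᵥ k) = k := by
    rw [mulVec_mulVec, mul_nonsing_inv _ ((isUnit_iff_isUnit_det _).1 hA.isUnit), one_mulVec]
  have hy : B *ᵥ (B⁻¹ *ᵥ r) = r := by
    rw [mulVec_mulVec, mul_nonsing_inv _ ((isUnit_iff_isUnit_det _).1 hB.isUnit), one_mulVec]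
  have hadj (u : m → ℝ) (w : n → ℝ) : (Wᵀ *ᵥ u) ⬝ᵥ w = u ⬝ᵥ (W *ᵥ w) := by
    rw [mulVec_transpose, dotProduct_mulVec]
  constructor
  · have h := two_mul_sub_le_of_mulVec_eq hA.posSemidef hx (Wᵀ *ᵥ (B⁻¹ *ᵥ r))
    have hq : W *ᵥ (A *ᵥ (Wᵀ *ᵥ (B⁻¹ *ᵥ r))) = r := by
      rw [mulVec_mulVec, mulVec_mulVec, ← hBW, hy]
    rw [hadj, hadj, hq, ← hr] at h
    rw [dotProduct_comm r]
    linarith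
  · have h := two_mul_sub_le_of_mulVec_eq hB.posSemidef hy ((lam + σ2)⁻¹ • r)
    have hR := dotProduct_mulVec_le_of_isGreatest_spectrum hK.isHermitian hlam (Wᵀ *ᵥ r)
    have hBr : r ⬝ᵥ (B *ᵥ r) ≤ (lam + σ2) * (r ⬝ᵥ r) := by
      rw [hadj, hadj, mulVec_mulVec r W Wᵀ, hW, one_mulVec, mulVec_mulVec,
        mulVec_mulVec] at hR
      rw [hBdef, add_mulVec, dotProduct_add, smul_mulVec, one_mulVec, dotProduct_smul, smul_eq_mul]
      linarith
    simp only [mulVec_smul, smul_dotProduct, dotProduct_smul, smul_eq_mul] at h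
    have h2 : (lam + σ2)⁻¹ * ((lam + σ2)⁻¹ * (r ⬝ᵥ (B *ᵥ r))) ≤ (lam + σ2)⁻¹ * (r ⬝ᵥ r) := by
      have hinv : 0 < (lam + σ2)⁻¹ := inv_pos.2 hlam0
      gcongr
      rwa [inv_mul_le_iff₀ hlam0]
    rw [div_eq_inv_mul]
    linarith

/-- Lemma 2 (bounds on the gappy-grid posterior variance). With
`K_Z = K_μ ⊗ K_x ⊗ K_T`, `W = I_N ⊗ W̃ ⊗ I_{N_t}` for a spatial selection matrix
`W̃`, a product-structured cross-covariance vector `k = k_μ ⊗ k_x ⊗ k_t`,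
`k_r = W k`, `Var = c − k_rᵀ (W K_Z Wᵀ + σ² I)⁻¹ k_r`, and
`Var_Z = c − kᵀ (K_Z + σ² I)⁻¹ k`, we have
`Var_Z ≤ Var ≤ c − ‖k_μ‖² ‖k_t‖² ‖W̃ k_x‖² / (λ_max(K_Z) + σ²)`. -/
theorem stmt_6 {N M Nt Nr : ℕ}
    (Kmu : Matrix (Fin N) (Fin N) ℝ) (Kx : Matrix (Fin M) (Fin M) ℝ)
    (KT : Matrix (Fin Nt) (Fin Nt) ℝ)
    (hKmu : Kmu.PosSemidef) (hKx : Kx.PosSemidef) (hKT : KT.PosSemidef)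
    (σ2 : ℝ) (hσ : 0 < σ2)
    (f : Fin Nr → Fin M) (hf : Function.Injective f)
    (Wt : Matrix (Fin Nr) (Fin M) ℝ)
    (hWt : Wt = Matrix.of fun i j => if f i = j then (1 : ℝ) else 0)
    (KZ : Matrix ((Fin N × Fin M) × Fin Nt) ((Fin N × Fin M) × Fin Nt) ℝ)
    (hKZ : KZ = (Kmu ⊗ₖ Kx) ⊗ₖ KT)
    (W : Matrix ((Fin N × Fin Nr) × Fin Nt) ((Fin N × Fin M) × Fin Nt) ℝ)
    (hW : W = ((1 : Matrix (Fin N) (Fin N) ℝ) ⊗ₖ Wt) ⊗ₖ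
      (1 : Matrix (Fin Nt) (Fin Nt) ℝ))
    (kmu : Fin N → ℝ) (kx : Fin M → ℝ) (kt : Fin Nt → ℝ)
    (k : (Fin N × Fin M) × Fin Nt → ℝ)
    (hk : k = fun pp => kmu pp.1.1 * kx pp.1.2 * kt pp.2)
    (kr : (Fin N × Fin Nr) × Fin Nt → ℝ) (hkr : kr = W *ᵥ k)
    (c lam : ℝ) (hlam : IsGreatest (spectrum ℝ KZ) lam)
    (Var VarZ : ℝ)
    (hVar : Var = c - kr ⬝ᵥ ((W * KZ * Wᵀ + σ2 • 1)⁻¹ *ᵥ kr))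
    (hVarZ : VarZ = c - k ⬝ᵥ ((KZ + σ2 • 1)⁻¹ *ᵥ k)) :
    VarZ ≤ Var ∧
      Var ≤ c - (kmu ⬝ᵥ kmu) * (kt ⬝ᵥ kt) * ((Wt *ᵥ kx) ⬝ᵥ (Wt *ᵥ kx)) /
        (lam + σ2) := by
  have hKZp : KZ.PosSemidef := hKZ ▸ (hKmu.kronecker hKx).kronecker hKT
  have hWtWt : Wt * Wtᵀ = 1 := by
    ext i j
    simp [hWt, mul_apply, one_apply, hf.eq_iff, eq_comm]
  have hWW : W * Wᵀ = 1 := by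
    rw [hW, ← kroneckerMap_transpose, ← kroneckerMap_transpose, ← mul_kronecker_mul,
      ← mul_kronecker_mul, hWtWt]
    simp
  have hkr' : kr = fun p => kmu p.1.1 * (Wt *ᵥ kx) p.1.2 * kt p.2 := by
    rw [hkr, hW, hk]
    ext ⟨⟨a, b⟩, t⟩
    simp [mulVec, dotProduct, Fintype.sum_prod_type, one_apply, Finset.mul_sum, Finset.sum_mul]
    exact Finset.sum_congr rfl fun _ _ => by ring
  have hnorm : kr ⬝ᵥ kr = (kmu ⬝ᵥ kmu) * (kt ⬝ᵥ kt) * ((Wt *ᵥ kx) ⬝ᵥ (Wt *ᵥ kx)) := by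
    rw [hkr', mul_right_comm]
    simp only [dotProduct, Fintype.sum_prod_type]
    rw [Finset.sum_mul_sum]
    simp only [Finset.sum_mul]
    simp only [Finset.mul_sum]
    refine Finset.sum_congr rfl fun _ _ => Finset.sum_congr rfl fun _ _ =>
      Finset.sum_congr rfl fun _ _ => by ring
  obtain ⟨h1, h2⟩ := gappy_quadratic_bounds hKZp hWW hσ hlam k
  rw [← hkr] at h1 h2
  rw [hnorm] at h2
  rw [hVar, hVarZ]
  exact ⟨by linarith, by linarith⟩
end

section
/- Let A be an n×n real symmetric positive definite matrix and let (W, V) be a pair of selection matrices partitioning n indices into n_r regular and n_g gappy indices. Then for every k ∈ ℝⁿ, conditioning on more points does not increase the posterior variance: kᵀ·A⁻¹·k ≥ (W·k)ᵀ·(W·A·Wᵀ)⁻¹·(W·k). Equivalently, for any c ∈ ℝ, c − kᵀ·A⁻¹·k ≤ c − (W·k)ᵀ·(W·A·Wᵀ)⁻¹·(W·k). -/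
/-!
Put `x = A⁻¹ k` and `y = Wᵀ u` with `u = (W A Wᵀ)⁻¹ W k`. The vector `y` is the `A`-orthogonal
projection of `x` onto the range of `Wᵀ`: both `xᵀ A y` and `yᵀ A y` equal `(W k)ᵀ u`, whereas
`xᵀ A x = kᵀ A⁻¹ k`. Hence `0 ≤ (x - y)ᵀ A (x - y) = kᵀ A⁻¹ k - (W k)ᵀ u`, which is the claim.
The matrix `W A Wᵀ` is positive definite, hence invertible, because `W Wᵀ = 1` makes `Wᵀ` injective.
-/

open Matrix

/-- Conditioning on more points does not increase the posterior variance: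
for `A` symmetric positive definite and a selection pair `(W, V)`,
`kᵀ A⁻¹ k ≥ (W k)ᵀ (W A Wᵀ)⁻¹ (W k)`; equivalently, for any `c`,
`c − kᵀ A⁻¹ k ≤ c − (W k)ᵀ (W A Wᵀ)⁻¹ (W k)`. -/
theorem stmt_8 {n nr ng : ℕ} (hn : n = nr + ng)
    (A : Matrix (Fin n) (Fin n) ℝ) (hA : A.PosDef)
    (W : Matrix (Fin nr) (Fin n) ℝ) (V : Matrix (Fin ng) (Fin n) ℝ)
    (hWW : W * Wᵀ = 1) (hVV : V * Vᵀ = 1) (hWV : W * Vᵀ = 0)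
    (hpart : Wᵀ * W + Vᵀ * V = 1)
    (k : Fin n → ℝ) :
    k ⬝ᵥ (A⁻¹ *ᵥ k) ≥ (W *ᵥ k) ⬝ᵥ ((W * A * Wᵀ)⁻¹ *ᵥ (W *ᵥ k)) ∧
      ∀ c : ℝ,
        c - k ⬝ᵥ (A⁻¹ *ᵥ k) ≤ c - (W *ᵥ k) ⬝ᵥ ((W * A * Wᵀ)⁻¹ *ᵥ (W *ᵥ k)) := by
  have hinj : Function.Injective W.vecMul := fun a b hab => by
    simpa [vecMul_vecMul, hWW] using congrArg (fun v => v ᵥ* Wᵀ) hab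
  have hS : (W * A * Wᵀ).PosDef := by
    simpa using hA.mul_mul_conjTranspose_same hinj
  set x := A⁻¹ *ᵥ k with hx
  set u := (W * A * Wᵀ)⁻¹ *ᵥ (W *ᵥ k) with hu
  have hAx : A *ᵥ x = k := by
    rw [hx, mulVec_mulVec, mul_nonsing_inv _ ((isUnit_iff_isUnit_det _).1 hA.isUnit), one_mulVec]
  have hSu : W *ᵥ (A *ᵥ (Wᵀ *ᵥ u)) = W *ᵥ k := by
    rw [mulVec_mulVec, mulVec_mulVec, hu, mulVec_mulVec,
      mul_nonsing_inv _ ((isUnit_iff_isUnit_det _).1 hS.isUnit), one_mulVec]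
  have hadj : ∀ z : Fin n → ℝ, (Wᵀ *ᵥ u) ⬝ᵥ z = (W *ᵥ z) ⬝ᵥ u := fun z => by
    rw [mulVec_transpose, ← dotProduct_mulVec, dotProduct_comm]
  have hAT : Aᵀ = A := by simpa using hA.isHermitian.eq
  have hxy : x ⬝ᵥ (A *ᵥ (Wᵀ *ᵥ u)) = (W *ᵥ k) ⬝ᵥ u := by
    rw [dotProduct_mulVec, ← mulVec_transpose, hAT, hAx, dotProduct_comm, hadj]
  have hpos : 0 ≤ (x - Wᵀ *ᵥ u) ⬝ᵥ (A *ᵥ (x - Wᵀ *ᵥ u)) := by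
    simpa using hA.posSemidef.dotProduct_mulVec_nonneg (x - Wᵀ *ᵥ u)
  rw [mulVec_sub, sub_dotProduct, dotProduct_sub, dotProduct_sub, hAx, hxy, hadj, hadj, hSu,
    dotProduct_comm x k] at hpos
  exact ⟨by linarith, fun c => by linarith⟩
end
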